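/- Let A be an abelian category and U ⊆ A a non-empty full subcategory closed under subobjects, quotients, and extensions. Assume that for any epimorphism A ↠ U in A with U ∈ U there is a subobject V ⊆ A with V ∈ U such that V → A → U is an epimorphism. Then the induced triangulated functor D^abs(U) → D^abs(A) between absolute derived categories is fully faithful. -/

import Mathlib

open CategoryTheory CategoryTheory.Limits CategoryTheory.Pretriangulated

variable {A : Type u} [Category.{v} A] [Abelian A]

/-- The totalization of a (short exact) sequence of complexes `K ⟶ L ⟶ M`, realized
(up to isomorphism in the homotopy category) as a shifted mapping cone of the canonical
map `Cone(f) ⟶ M`. -/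
noncomputable def totSES {K L M : CochainComplex A ℤ} (f : K ⟶ L) (g : L ⟶ M)
    (hfg : f ≫ g = 0) : CochainComplex A ℤ :=
  (CochainComplex.mappingCone
    (CochainComplex.mappingCone.desc f 0 g (by simp [hfg])))⟦(-1 : ℤ)⟧

/-- A class of objects of the homotopy category which contains the totalizations of all
degreewise short exact sequences of complexes and is thick: closed under isomorphisms,
zero objects, shifts, extensions (cones) and direct summands. -/
structure TotClosed (P : HomotopyCategory A (ComplexShape.up ℤ) → Prop) : Prop where
  tot : ∀ {K L M : CochainComplex A ℤ} (f : K ⟶ L) (g : L ⟶ M) (hfg : f ≫ g = 0),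
    (ShortComplex.mk f g hfg).ShortExact →
    P ((HomotopyCategory.quotient A (ComplexShape.up ℤ)).obj (totSES f g hfg))
  zero : ∀ (X : HomotopyCategory A (ComplexShape.up ℤ)), IsZero X → P X
  iso : ∀ {X Y : HomotopyCategory A (ComplexShape.up ℤ)}, (X ≅ Y) → P X → P Y
  shift : ∀ (X : HomotopyCategory A (ComplexShape.up ℤ)) (n : ℤ), P X → P (X⟦n⟧)
  ext₂ : ∀ (T : Triangle (HomotopyCategory A (ComplexShape.up ℤ))),
    T ∈ distinguishedTriangles → P T.obj₁ → P T.obj₃ → P T.obj₂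
  smd : ∀ (X Y : HomotopyCategory A (ComplexShape.up ℤ)), P (X ⊞ Y) → P X

/-- A complex is absolutely acyclic if its image in the homotopy category belongs to
the minimal thick subcategory containing the totalizations of short exact sequences. -/
def IsAbsolutelyAcyclic (X : HomotopyCategory A (ComplexShape.up ℤ)) : Prop :=
  ∀ P, TotClosed P → P X

variable (A) in
/-- The class of morphisms of the homotopy category whose cone is absolutely acyclic;
the absolute derived category `D^abs(A)` is the localization of `K(A)` at this class
(equivalently, the Verdier quotient by the absolutely acyclic complexes). -/
def absW : MorphismProperty (HomotopyCategory A (ComplexShape.up ℤ)) := fun X Y f =>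
  ∃ (Z : HomotopyCategory A (ComplexShape.up ℤ)) (g : Y ⟶ Z) (h : Z ⟶ X⟦(1 : ℤ)⟧),
    Triangle.mk f g h ∈ distinguishedTriangles ∧ IsAbsolutelyAcyclic Z

/-!
A triangulated subcategory `Φ : C ⥤ T` stays fully faithful after passing to the Verdier quotients
by `Φ⁻¹ B` and `B` as soon as every morphism from an object of `C` to an object of `B` factors
through an object of `C ∩ B`. The objects of `T` satisfying such a factorization condition form a
thick subcategory, so for absolutely acyclic complexes it suffices to consider a morphism from a
complex over `𝒰` to the totalization of a short exact sequence `S` of complexes over `A`. This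
involves only one object of `𝒰` for each degree and each term of `S`. After lifting those over
`S.X₃` to `S.X₂`, all of them together generate a subcomplex of `S.X₂` with terms in `𝒰`, and the
short exact subcomplex of `S` with this middle term has a totalization through which the morphism
factors.
-/

section FactorsThrough

variable {C : Type*} [Category* C]

/-- The objects `Z` such that every morphism to `Z` from an object satisfying `P` factors through
an object satisfying `N`. -/
def FactorsThrough (P N : ObjectProperty C) : ObjectProperty C :=
  fun Z ↦ ∀ ⦃X : C⦄ (f : X ⟶ Z), P X → ∃ (W : C) (a : X ⟶ W) (b : W ⟶ Z), N W ∧ a ≫ b = f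

instance (P N : ObjectProperty C) : (FactorsThrough P N).IsStableUnderRetracts where
  of_retract h hZ X f hX := by
    obtain ⟨W, a, b, hW, fac⟩ := hZ (f ≫ h.i) hX
    exact ⟨W, a, b ≫ h.r, hW, by simp [reassoc_of% fac]⟩

instance (P N : ObjectProperty C) [N.ContainsZero] : (FactorsThrough P N).ContainsZero := by
  obtain ⟨Z, hZ, hNZ⟩ := N.exists_prop_of_containsZero
  exact ⟨Z, hZ, fun X f _ ↦ ⟨Z, f, 𝟙 Z, hNZ, by simp⟩⟩

instance (P N : ObjectProperty C) [HasShift C ℤ] [P.IsStableUnderShift ℤ]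
    [N.IsStableUnderShift ℤ] : (FactorsThrough P N).IsStableUnderShift ℤ where
  isStableUnderShiftBy n := ⟨fun Z hZ X f hX ↦ by
    let e := (shiftFunctorCompIsoId C (-n) n (by lia)).app X
    obtain ⟨f', hf'⟩ := (shiftFunctor C n).map_surjective (e.hom ≫ f)
    obtain ⟨W, a, b, hW, fac⟩ := hZ f' (P.le_shift (-n) _ hX)
    exact ⟨W⟦n⟧, e.inv ≫ a⟦n⟧', b⟦n⟧', N.le_shift n _ hW, by
      rw [Category.assoc, ← Functor.map_comp, fac, hf', e.inv_hom_id_assoc]⟩⟩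

variable {T : Type*} [Category* T] {Φ : C ⥤ T} {N : ObjectProperty C} {B : ObjectProperty T}

lemma isVerdierLeftLocalizing_essImage_of_le_factorsThrough
    [B.IsClosedUnderIsomorphisms] (hN : N ≤ B.inverseImage Φ)
    (hB : B ≤ FactorsThrough Φ.essImage (N.map Φ)) :
    Φ.essImage.IsVerdierLeftLocalizing B where
  fac f hX hY := by
    obtain ⟨Z, a, b, ⟨K, hK, ⟨e⟩⟩, fac⟩ := hB _ hY f hX
    exact ⟨Z, a, b, ⟨K, ⟨e⟩⟩, B.prop_of_iso e (hN _ hK), fac⟩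

lemma inverseImage_eq_of_le_factorsThrough [Φ.Full] [Φ.Faithful]
    [N.IsStableUnderRetracts] (hN : N ≤ B.inverseImage Φ)
    (hB : B ≤ FactorsThrough Φ.essImage (N.map Φ)) : B.inverseImage Φ = N := by
  refine le_antisymm (fun K hK ↦ ?_) hN
  obtain ⟨W, a, b, ⟨K', hK', ⟨e⟩⟩, fac⟩ := hB _ hK (𝟙 (Φ.obj K)) (Φ.obj_mem_essImage K)
  exact N.prop_of_retract
    { i := Φ.preimage (a ≫ e.inv)
      r := Φ.preimage (e.hom ≫ b)
      retract := Φ.map_injective (by simp [fac]) } hK'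

end FactorsThrough

section Triangulated

variable {T : Type*} [Category* T]
  [HasZeroObject T] [HasShift T ℤ] [Preadditive T]
  [∀ n : ℤ, (shiftFunctor T n).Additive] [Pretriangulated T]

lemma exists_iso_biprod_of_retract {X Y : T} (h : Retract X Y) :
    ∃ Z : T, Nonempty (Y ≅ X ⊞ Z) := by
  obtain ⟨Z, g, w, hT⟩ := distinguished_cocone_triangle h.i
  have hw : w = 0 := (Triangle.mor₃_eq_zero_iff_mono₁ _ hT).2 (inferInstanceAs (Mono h.i))
  obtain ⟨e, -⟩ := exists_iso_binaryBiproduct_of_distTriang _ hT hw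
  exact ⟨Z, ⟨e⟩⟩

variable {P N : ObjectProperty T} [P.IsTriangulated]

lemma factorsThrough_iff_exists_trW (hNP : N ≤ P) (Z : T) :
    FactorsThrough P N Z ↔ ∀ ⦃X : T⦄ (f : X ⟶ Z), P X →
      ∃ (X' : T) (s : X' ⟶ X), P X' ∧ N.trW s ∧ s ≫ f = 0 := by
  refine ⟨fun h X f hX ↦ ?_, fun h X f hX ↦ ?_⟩
  · obtain ⟨W, a, b, hW, rfl⟩ := h f hX
    obtain ⟨X', hX', s, w, hT⟩ := P.distinguished_cocone_triangle₁ a hX (hNP _ hW)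
    exact ⟨X', s, hX', ⟨_, _, _, hT, hW⟩, by
      rw [reassoc_of% (show s ≫ a = 0 from comp_distTriang_mor_zero₁₂ _ hT), zero_comp]⟩
  · obtain ⟨X', s, -, ⟨W, a, w, hT, hW⟩, hs⟩ := h f hX
    obtain ⟨b, hb⟩ := Triangle.yoneda_exact₂ _ hT f hs
    exact ⟨W, a, b, hW, hb.symm⟩

lemma isTriangulated_factorsThrough [IsTriangulated T] [N.IsTriangulated] (hNP : N ≤ P) :
    (FactorsThrough P N).IsTriangulated where
  toIsTriangulatedClosed₂ := .mk' fun D hD h₁ h₃ ↦ by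
    rw [factorsThrough_iff_exists_trW hNP] at h₁ h₃ ⊢
    intro X f hX
    obtain ⟨X', s, hX', hs, hsf⟩ := h₃ (f ≫ D.mor₂) hX
    obtain ⟨c, hc⟩ := Triangle.coyoneda_exact₂ _ hD (s ≫ f) (by rw [Category.assoc, hsf])
    obtain ⟨X'', t, hX'', ht, htc⟩ := h₁ c hX'
    exact ⟨X'', t ≫ s, hX'', N.trW.comp_mem _ _ ht hs, by
      rw [Category.assoc, hc, reassoc_of% htc, zero_comp]⟩

end Triangulated

section Verdier

variable {C T : Type*} [Category* C] [Category* T]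
  [HasZeroObject C] [HasShift C ℤ] [Preadditive C]
  [∀ n : ℤ, (shiftFunctor C n).Additive] [Pretriangulated C]
  [HasZeroObject T] [HasShift T ℤ] [Preadditive T]
  [∀ n : ℤ, (shiftFunctor T n).Additive] [Pretriangulated T]
  {D₁ D₂ : Type*} [Category* D₁] [Category* D₂]
  (Φ : C ⥤ T) [Φ.Full] [Φ.Faithful]

lemma fullyFaithful_of_isVerdierLeftLocalizing_essImage [IsTriangulated T]
    [Φ.CommShift ℤ] [Φ.IsTriangulated]
    (B : ObjectProperty T) [B.IsTriangulated] [B.IsClosedUnderIsomorphisms]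
    [Φ.essImage.IsVerdierLeftLocalizing B] {L₁ : C ⥤ D₁} {L₂ : T ⥤ D₂}
    [L₁.IsLocalization (B.inverseImage Φ).trW] [L₂.IsLocalization B.trW]
    {F : D₁ ⥤ D₂} (e : Φ ⋙ L₂ ≅ L₁ ⋙ F) : F.Full ∧ F.Faithful := by
  let E := Φ.toEssImage.asEquivalence
  have : (E.inverse ⋙ L₁).IsLocalization (B.inverseImage Φ.essImage.ι).trW := by
    refine Functor.IsLocalization.of_equivalence_source L₁ (B.inverseImage Φ).trW _ _ E
      (fun X Y f hf ↦ MorphismProperty.le_isoClosure _ _ ?_) (fun X Y f hf ↦ ?_)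
      (Functor.isoWhiskerRight E.unitIso.symm L₁)
    · rw [B.inverseImage_trW_iff] at hf ⊢
      exact hf
    · refine Localization.inverts L₁ (B.inverseImage Φ).trW _ ?_
      rw [B.inverseImage_trW_iff] at hf ⊢
      exact (B.trW.arrow_mk_iso_iff (((Functor.mapArrowFunctor _ _).mapIso
        (Functor.isoWhiskerRight E.counitIso Φ.essImage.ι)).app (Arrow.mk f))).2 hf
  let e' : (E.inverse ⋙ L₁) ⋙ F ≅ Φ.essImage.ι ⋙ L₂ :=
    Functor.isoWhiskerLeft E.inverse e.symm ≪≫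
      Functor.isoWhiskerRight E.counitIso (Φ.essImage.ι ⋙ L₂)
  let h := ObjectProperty.IsVerdierLeftLocalizing.fullyFaithful Φ.essImage B e'
  exact ⟨h.full, h.faithful⟩

end Verdier

section LiftsAlongEpi

/-- A property of objects `P` lifts along epimorphisms if every epimorphism `B ⟶ U` onto an object
satisfying `P` stays an epimorphism after precomposition with a morphism `V ⟶ B` from some object
satisfying `P`. -/
def LiftsAlongEpi (P : ObjectProperty A) : Prop :=
  ∀ ⦃B U : A⦄ (p : B ⟶ U) [Epi p], P U → ∃ (V : A) (v : V ⟶ B), P V ∧ Epi (v ≫ p)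

lemma LiftsAlongEpi.exists_comp_eq {P : ObjectProperty A} (hP : LiftsAlongEpi P) {V X Y : A}
    (g : X ⟶ Y) [Epi g] (c : V ⟶ Y) (hV : P V) :
    ∃ (W : A) (w : W ⟶ X) (r : W ⟶ V), P W ∧ Epi r ∧ w ≫ g = r ≫ c := by
  obtain ⟨W, w, hW, _⟩ := hP (pullback.fst c g) hV
  exact ⟨W, w ≫ pullback.snd c g, w ≫ pullback.fst c g, hW, inferInstance, by
    simp only [Category.assoc, pullback.condition]⟩

end LiftsAlongEpi

section SubShortComplex

variable {S : ShortComplex A} {L : A} (l : L ⟶ S.X₂)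

/-- The short complex `0 ⟶ ker ⟶ L ⟶ im ⟶ 0` attached to the composition `L ⟶ S.X₂ ⟶ S.X₃`.
When `S` is short exact and `L` is a subobject of `S.X₂`, this is the short exact subcomplex of `S`
with middle term `L`. -/
noncomputable abbrev subShortComplex : ShortComplex A where
  f := kernel.ι (Abelian.factorThruImage (l ≫ S.g))
  g := Abelian.factorThruImage (l ≫ S.g)
  zero := kernel.condition _

lemma shortExact_subShortComplex : (subShortComplex l).ShortExact where
  exact := ShortComplex.exact_kernel _
  mono_f := inferInstanceAs (Mono (kernel.ι (Abelian.factorThruImage (l ≫ S.g))))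
  epi_g := inferInstanceAs (Epi (Abelian.factorThruImage (l ≫ S.g)))

lemma subShortComplex_f_comp_comp_g : ((subShortComplex l).f ≫ l) ≫ S.g = 0 := by
  rw [Category.assoc, ← Abelian.image.fac (l ≫ S.g), (subShortComplex l).zero_assoc, zero_comp]

variable [Mono S.f] (hS : S.Exact)

/-- The canonical morphism `subShortComplex l ⟶ S`. -/
@[simps]
noncomputable def subShortComplexHom : subShortComplex l ⟶ S where
  τ₁ := hS.lift ((subShortComplex l).f ≫ l) (subShortComplex_f_comp_comp_g l)
  τ₂ := l
  τ₃ := Abelian.image.ι (l ≫ S.g)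
  comm₁₂ := hS.lift_f _ _
  comm₂₃ := (Abelian.image.fac (l ≫ S.g)).symm

instance [Mono l] : Mono (subShortComplexHom l hS).τ₁ := by
  have := (shortExact_subShortComplex l).mono_f
  have : Mono ((subShortComplexHom l hS).τ₁ ≫ S.f) := by
    rw [(subShortComplexHom l hS).comm₁₂]
    exact mono_comp (subShortComplex l).f l
  exact mono_of_mono _ S.f

instance : Mono (subShortComplexHom l hS).τ₃ :=
  inferInstanceAs (Mono (Abelian.image.ι (l ≫ S.g)))

end SubShortComplex

lemma exists_comp_τ₁_eq {S' S : ShortComplex A} (j : S' ⟶ S) (hS' : S'.Exact)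
    [Mono S'.f] [Mono S.f] [Mono j.τ₃] {V : A} (a : V ⟶ S.X₁)
    (h : ∃ y : V ⟶ S'.X₂, y ≫ j.τ₂ = a ≫ S.f) : ∃ z : V ⟶ S'.X₁, z ≫ j.τ₁ = a := by
  obtain ⟨y, hy⟩ := h
  have hyg : y ≫ S'.g = 0 := by
    simp [← cancel_mono j.τ₃, j.comm₂₃.symm, reassoc_of% hy]
  refine ⟨hS'.lift y hyg, ?_⟩
  rw [← cancel_mono S.f, Category.assoc, j.comm₁₂, hS'.lift_f_assoc, hy]

section Complexes

open CochainComplex CochainComplex.HomComplex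

lemma exists_comp_eq_of_forall_f {C : Type*} [Category* C] [HasZeroMorphisms C] {ι : Type*}
    {c : ComplexShape ι} {K L M : HomologicalComplex C c} (m : K ⟶ L) [∀ n, Mono (m.f n)]
    (φ : M ⟶ L) (h : ∀ n, ∃ y : M.X n ⟶ K.X n, y ≫ m.f n = φ.f n) :
    ∃ ψ : M ⟶ K, ψ ≫ m = φ := by
  choose y hy using h
  refine ⟨{ f := y, comm' := fun i j _ ↦ ?_ }, by ext n; exact hy n⟩
  rw [← cancel_mono (m.f j), Category.assoc, ← m.comm, reassoc_of% (hy i), φ.comm, Category.assoc,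
    hy j]

section MappingCone

variable {C : Type*} [Category* C] [Preadditive C] [HasBinaryBiproducts C]
  {K L K' L' : CochainComplex C ℤ} {f : K ⟶ L} {f' : K' ⟶ L'} {a : K ⟶ K'} {b : L ⟶ L'}
  (comm : f ≫ b = a ≫ f')

/-- The isomorphism of mapping cones induced by an isomorphism of morphisms of complexes. -/
@[simps]
noncomputable def mappingConeMapIso (a : K ≅ K') (b : L ≅ L') (comm : f ≫ b.hom = a.hom ≫ f') :
    mappingCone f ≅ mappingCone f' where
  hom := mappingCone.map f f' a.hom b.hom comm
  inv := mappingCone.map f' f a.inv b.inv (by simp [Iso.comp_inv_eq, comm])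
  hom_inv_id := by simp only [← mappingCone.map_comp, Iso.hom_inv_id, mappingCone.map_id]
  inv_hom_id := by simp only [← mappingCone.map_comp, Iso.inv_hom_id, mappingCone.map_id]

lemma mono_mappingConeMap_f [∀ n, Mono (a.f n)] [∀ n, Mono (b.f n)] (n : ℤ) :
    Mono ((mappingCone.map f f' a b comm).f n) := by
  refine Preadditive.mono_of_cancel_zero _ fun x hx ↦ ?_
  rw [mappingCone.ext_to_iff _ _ (n + 1) rfl] at hx ⊢
  rw [← cancel_mono (a.f (n + 1)), ← cancel_mono (b.f n)]
  simpa [mappingCone.map, mappingCone.desc_f _ _ _ _ n (n + 1) rfl] using hx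

lemma exists_comp_mappingConeMap_f_eq {V : C} {p q : ℤ} (hpq : p + 1 = q)
    (x : V ⟶ (mappingCone f').X p)
    (h₁ : ∃ y, y ≫ a.f q = x ≫ (mappingCone.fst f').1.v p q hpq)
    (h₂ : ∃ y, y ≫ b.f p = x ≫ (mappingCone.snd f').v p p (add_zero p)) :
    ∃ y, y ≫ (mappingCone.map f f' a b comm).f p = x := by
  obtain ⟨y₁, hy₁⟩ := h₁
  obtain ⟨y₂, hy₂⟩ := h₂
  refine ⟨y₁ ≫ (mappingCone.inl f).v q p (by lia) + y₂ ≫ (mappingCone.inr f).f p, ?_⟩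
  rw [mappingCone.ext_to_iff _ _ q hpq]
  constructor
  · simp [mappingCone.map, hy₁]
  · simp [mappingCone.map, hy₂]

end MappingCone

/-- The iterated mapping cone of `S.X₁ ⟶ S.X₂ ⟶ S.X₃`, which is the totalization of `S` up to
a shift. -/
@[simps]
noncomputable def totCone : ShortComplex (CochainComplex A ℤ) ⥤ CochainComplex A ℤ where
  obj S := mappingCone (mappingCone.descShortComplex S)
  map {S S'} j :=
    mappingCone.map _ _ (mappingCone.map S.f S'.f j.τ₁ j.τ₂ j.comm₁₂.symm) j.τ₃
      (mappingCone.map_descShortComplex S S' j).symm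
  map_id S := by simp only [ShortComplex.id_τ₁, ShortComplex.id_τ₂, ShortComplex.id_τ₃,
    mappingCone.map_id]
  map_comp j j' := by simp only [ShortComplex.comp_τ₁, ShortComplex.comp_τ₂, ShortComplex.comp_τ₃,
    ← mappingCone.map_comp]

section

variable {S' S : ShortComplex (CochainComplex A ℤ)} (j : S' ⟶ S)

lemma mono_totConeMap_f [Mono j.τ₁] [Mono j.τ₂] [Mono j.τ₃] (n : ℤ) :
    Mono ((totCone.map j).f n) := by
  have := mono_mappingConeMap_f j.comm₁₂.symm
  exact mono_mappingConeMap_f (mappingCone.map_descShortComplex S' S j).symm n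

lemma exists_comp_totConeMap_f_eq {V : A} {p q r : ℤ} (hpq : p + 1 = q) (hqr : q + 1 = r)
    (x : V ⟶ (totCone.obj S).X p)
    (h₁ : ∃ y, y ≫ j.τ₁.f r =
      (x ≫ (mappingCone.fst _).1.v p q hpq) ≫ (mappingCone.fst S.f).1.v q r hqr)
    (h₂ : ∃ y, y ≫ j.τ₂.f q =
      (x ≫ (mappingCone.fst _).1.v p q hpq) ≫ (mappingCone.snd S.f).v q q (add_zero q))
    (h₃ : ∃ y, y ≫ j.τ₃.f p = x ≫ (mappingCone.snd _).v p p (add_zero p)) :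
    ∃ y, y ≫ (totCone.map j).f p = x :=
  exists_comp_mappingConeMap_f_eq (mappingCone.map_descShortComplex S' S j).symm hpq x
    (exists_comp_mappingConeMap_f_eq j.comm₁₂.symm hqr _ h₁ h₂) h₃

end

lemma exists_subcomplex_of_family {P : ObjectProperty A} [P.IsClosedUnderQuotients]
    [P.IsClosedUnderExtensions] (L : CochainComplex A ℤ) {V : ℤ → A} (hV : ∀ n, P (V n))
    (w : ∀ n, V n ⟶ L.X n) :
    ∃ (L' : CochainComplex A ℤ) (l : L' ⟶ L), Mono l ∧ (∀ n, P (L'.X n)) ∧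
      ∀ n, ∃ y : V n ⟶ L'.X n, y ≫ l.f n = w n := by
  -- the subcomplex generated by the `V n` is the image of a morphism to `L` from the sum of the
  -- disk complexes on the `V n`, which is the cone of `𝟙 E`
  let E : CochainComplex A ℤ := { X := fun p ↦ V (p - 1), d := fun _ _ ↦ 0 }
  let α : Cochain E L (-1) :=
    Cochain.mk fun p q hpq ↦ eqToHom (congrArg V (by lia : p - 1 = q)) ≫ w q
  let β : E ⟶ L := Cocycle.homOf (Cocycle.mk (δ (-1) 0 α) 1 (by simp) (δ_δ _ _ _ _))
  let D : mappingCone (𝟙 E) ⟶ L := mappingCone.desc (𝟙 E) α β (by simp [β])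
  refine ⟨Abelian.image D, Abelian.image.ι D, inferInstance, fun n ↦ ?_, fun n ↦ ?_⟩
  · have hcone : P ((mappingCone (𝟙 E)).X n) := P.prop_X₂_of_shortExact
      (mappingCone.triangleRotateShortComplexSplitting (𝟙 E) n).shortExact (hV _) (hV _)
    exact P.prop_of_epi ((Abelian.factorThruImage D).f n) hcone
  · refine ⟨eqToHom (congrArg V (by lia)) ≫ (mappingCone.inl (𝟙 E)).v (n + 1) n (by lia) ≫
      (Abelian.factorThruImage D).f n, ?_⟩
    have hD : (Abelian.factorThruImage D).f n ≫ (Abelian.image.ι D).f n = D.f n := by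
      rw [← HomologicalComplex.comp_f, Abelian.image.fac]
    simp [hD, D, α]

lemma exists_shortExact_subcomplex_of_families {P : ObjectProperty A} [P.IsClosedUnderQuotients]
    [P.IsClosedUnderExtensions] (hP : LiftsAlongEpi P) {S : ShortComplex (CochainComplex A ℤ)}
    (hS : S.ShortExact) {V₁ V₂ V₃ : ℤ → A} (hV₁ : ∀ n, P (V₁ n)) (hV₂ : ∀ n, P (V₂ n))
    (hV₃ : ∀ n, P (V₃ n)) (a : ∀ n, V₁ n ⟶ S.X₁.X n) (b : ∀ n, V₂ n ⟶ S.X₂.X n)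
    (c : ∀ n, V₃ n ⟶ S.X₃.X n) :
    ∃ (S' : ShortComplex (CochainComplex A ℤ)) (j : S' ⟶ S), S'.ShortExact ∧
      (Mono j.τ₁ ∧ Mono j.τ₂ ∧ Mono j.τ₃) ∧ (∀ n, P (S'.X₂.X n)) ∧
      (∀ n, ∃ y, y ≫ j.τ₁.f n = a n) ∧ (∀ n, ∃ y, y ≫ j.τ₂.f n = b n) ∧
      ∀ n, ∃ y, y ≫ j.τ₃.f n = c n := by
  have := hS.mono_f
  have := hS.epi_g
  choose W w r hW hr hwr using fun n ↦ hP.exists_comp_eq (S.g.f n) (c n) (hV₃ n)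
  obtain ⟨L, l, hl, hL, hy⟩ := exists_subcomplex_of_family S.X₂
    (fun n ↦ P.prop_biprod (P.prop_biprod (hV₁ n) (hV₂ n)) (hW n))
    (fun n ↦ biprod.desc (biprod.desc (a n ≫ S.f.f n) (b n)) (w n))
  choose y hy using hy
  let j := subShortComplexHom l hS.exact
  have : Mono j.τ₃ := inferInstance
  have hS' := shortExact_subShortComplex l
  refine ⟨subShortComplex l, j, hS', ⟨inferInstance, hl, inferInstance⟩, hL, fun n ↦ ?_,
    fun n ↦ ⟨biprod.inr ≫ biprod.inl ≫ y n, ?_⟩, fun n ↦ ?_⟩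
  · let ev := HomologicalComplex.eval A (ComplexShape.up ℤ) n
    let jₙ : (subShortComplex l).map ev ⟶ S.map ev := ev.mapShortComplex.map j
    have hS'ₙ := hS'.map_of_exact ev
    have := hS'ₙ.mono_f
    have := (hS.map_of_exact ev).mono_f
    have : Mono jₙ.τ₃ := inferInstanceAs (Mono (j.τ₃.f n))
    have hyn : (biprod.inl ≫ biprod.inl ≫ y n) ≫ l.f n = a n ≫ S.f.f n := by simp [hy]
    exact exists_comp_τ₁_eq jₙ hS'ₙ.exact (a n) ⟨_, hyn⟩
  · simp [j, hy]
  · have hj : (subShortComplex l).g.f n ≫ j.τ₃.f n = l.f n ≫ S.g.f n :=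
      (HomologicalComplex.congr_hom j.comm₂₃ n).symm
    have sq : CommSq (biprod.inr ≫ y n ≫ (subShortComplex l).g.f n) (r n) (j.τ₃.f n) (c n) :=
      ⟨by simp [hj, reassoc_of% hy, hwr]⟩
    have : StrongEpi (r n) := strongEpi_of_epi _
    exact ⟨sq.lift, sq.fac_right⟩

lemma exists_shortExact_comp_totConeMap_eq {P : ObjectProperty A} [P.IsClosedUnderQuotients]
    [P.IsClosedUnderExtensions] (hP : LiftsAlongEpi P) {S : ShortComplex (CochainComplex A ℤ)}
    (hS : S.ShortExact) {X : CochainComplex A ℤ} (hX : ∀ n, P (X.X n)) (φ : X ⟶ totCone.obj S) :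
    ∃ (S' : ShortComplex (CochainComplex A ℤ)) (j : S' ⟶ S) (ψ : X ⟶ totCone.obj S'),
      S'.ShortExact ∧ (∀ n, P (S'.X₂.X n)) ∧ ψ ≫ totCone.map j = φ := by
  obtain ⟨S', j, hS', ⟨_, _, _⟩, hX₂, h₁, h₂, h₃⟩ := exists_shortExact_subcomplex_of_families hP hS
    (fun n ↦ hX (n - 2)) (fun n ↦ hX (n - 1)) hX
    (fun n ↦ (φ.f (n - 2) ≫ (mappingCone.fst _).1.v (n - 2) (n - 1) (by lia)) ≫
      (mappingCone.fst S.f).1.v (n - 1) n (by lia))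
    (fun n ↦ (φ.f (n - 1) ≫ (mappingCone.fst _).1.v (n - 1) n (by lia)) ≫
      (mappingCone.snd S.f).v n n (add_zero n))
    (fun n ↦ φ.f n ≫ (mappingCone.snd _).v n n (add_zero n))
  have := mono_totConeMap_f j
  have hφ {p q r : ℤ} (hpq : p + 1 = q) (hqr : q + 1 = r) :
      ∃ y, y ≫ (totCone.map j).f p = φ.f p :=
    exists_comp_totConeMap_f_eq j hpq hqr (φ.f p)
      (by obtain rfl : p = r - 2 := by lia
          obtain rfl : q = r - 1 := by lia
          exact h₁ r)
      (by obtain rfl : p = q - 1 := by lia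
          exact h₂ q) (h₃ p)
  obtain ⟨ψ, hψ⟩ := exists_comp_eq_of_forall_f (totCone.map j) φ fun _ ↦ hφ rfl rfl
  exact ⟨S', j, ψ, hS', hX₂, hψ⟩

end Complexes

section EssImage

variable {C D : Type*} [Category* C] [Category* D] (F : C ⥤ D) [F.Full] [F.Faithful]

lemma essImage_mapHomologicalComplex_of_forall_X [HasZeroMorphisms C] [HasZeroMorphisms D]
    [F.PreservesZeroMorphisms] {ι : Type*} {c : ComplexShape ι} {K : HomologicalComplex D c}
    (hK : ∀ n, F.essImage (K.X n)) : (F.mapHomologicalComplex c).essImage K := by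
  choose X e using hK
  let e' n := (e n).some
  let K' : HomologicalComplex C c :=
    { X := X
      d i j := F.preimage ((e' i).hom ≫ K.d i j ≫ (e' j).inv)
      shape i j hij := F.map_injective (by simp [K.shape i j hij])
      d_comp_d' i j k _ _ := F.map_injective (by simp) }
  refine ⟨K', ⟨HomologicalComplex.Hom.isoOfComponents e' fun i j _ ↦ ?_⟩⟩
  change (e' i).hom ≫ K.d i j = F.map (F.preimage _) ≫ (e' j).hom
  simp

lemma essImage_mapShortComplex_of_forall_X [HasZeroMorphisms C] [HasZeroMorphisms D]
    [F.PreservesZeroMorphisms] {S : ShortComplex D} (h₁ : F.essImage S.X₁)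
    (h₂ : F.essImage S.X₂) (h₃ : F.essImage S.X₃) : F.mapShortComplex.essImage S := by
  obtain ⟨K₁, ⟨e₁⟩⟩ := h₁
  obtain ⟨K₂, ⟨e₂⟩⟩ := h₂
  obtain ⟨K₃, ⟨e₃⟩⟩ := h₃
  let S' : ShortComplex C :=
    { f := F.preimage (e₁.hom ≫ S.f ≫ e₂.inv)
      g := F.preimage (e₂.hom ≫ S.g ≫ e₃.inv)
      zero := F.map_injective (by simp) }
  refine ⟨S', ⟨ShortComplex.isoMk e₁ e₂ e₃ ?_ ?_⟩⟩
  · change e₁.hom ≫ S.f = F.map (F.preimage _) ≫ e₂.hom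
    simp
  · change e₂.hom ≫ S.g = F.map (F.preimage _) ≫ e₃.hom
    simp

end EssImage

section

variable {𝒰 : Type u₁} [Category.{v₁} 𝒰] [Abelian 𝒰] (ι : 𝒰 ⥤ A)

lemma exists_shortExact_map_iso [ι.Full] [ι.Faithful] [ι.Additive]
    [ι.essImage.IsClosedUnderSubobjects] [ι.essImage.IsClosedUnderQuotients]
    {S : ShortComplex (CochainComplex A ℤ)}
    (hS : S.ShortExact) (hX₂ : ∀ n, ι.essImage (S.X₂.X n)) :
    ∃ S' : ShortComplex (CochainComplex 𝒰 ℤ), S'.ShortExact ∧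
      Nonempty (S'.map (ι.mapHomologicalComplex (ComplexShape.up ℤ)) ≅ S) := by
  have := hS.mono_f
  have := hS.epi_g
  obtain ⟨S', ⟨e⟩⟩ := essImage_mapShortComplex_of_forall_X (ι.mapHomologicalComplex _)
    (essImage_mapHomologicalComplex_of_forall_X ι fun n ↦
      ι.essImage.prop_of_mono (S.f.f n) (hX₂ n))
    (essImage_mapHomologicalComplex_of_forall_X ι hX₂)
    (essImage_mapHomologicalComplex_of_forall_X ι fun n ↦
      ι.essImage.prop_of_epi (S.g.f n) (hX₂ n))
  exact ⟨S', ShortExact.reflects_shortExact_of_faithful _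
    (ShortComplex.shortExact_of_iso e.symm hS), ⟨e⟩⟩

open CochainComplex in
/-- The formation of `totCone` commutes with additive functors. -/
noncomputable def mapTotConeIso [ι.Additive] (S : ShortComplex (CochainComplex 𝒰 ℤ)) :
    (ι.mapHomologicalComplex (ComplexShape.up ℤ)).obj (totCone.obj S) ≅
      totCone.obj (S.map (ι.mapHomologicalComplex (ComplexShape.up ℤ))) :=
  mappingCone.mapHomologicalComplexIso (mappingCone.descShortComplex S) ι ≪≫
    mappingConeMapIso (mappingCone.mapHomologicalComplexIso S.f ι) (Iso.refl _)
      ((Category.comp_id _).trans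
        (mappingCone.mapHomologicalComplexIso_hom_descShortComplex ι S).symm)

end

section AbsolutelyAcyclic

variable (A) in
/-- `IsAbsolutelyAcyclic` as a property of objects of the homotopy category of `A`. -/
abbrev absAcyclic : ObjectProperty (HomotopyCategory A (ComplexShape.up ℤ)) :=
  IsAbsolutelyAcyclic

lemma totClosed_absAcyclic : TotClosed (absAcyclic A) where
  tot f g hfg h _ hP := hP.tot f g hfg h
  zero X hX _ hP := hP.zero X hX
  iso e hX P hP := hP.iso e (hX P hP)
  shift X n hX P hP := hP.shift X n (hX P hP)
  ext₂ T hT h₁ h₃ P hP := hP.ext₂ T hT (h₁ P hP) (h₃ P hP)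
  smd X Y h P hP := hP.smd X Y (h P hP)

instance : (absAcyclic A).IsClosedUnderIsomorphisms where
  of_iso e := totClosed_absAcyclic.iso e

instance : (absAcyclic A).IsTriangulated where
  exists_zero :=
    have ⟨Z, hZ⟩ := HasZeroObject.zero (C := HomotopyCategory A (ComplexShape.up ℤ))
    ⟨Z, hZ, totClosed_absAcyclic.zero Z hZ⟩
  isStableUnderShiftBy n := ⟨fun X hX ↦ totClosed_absAcyclic.shift X n hX⟩
  toIsTriangulatedClosed₂ := .mk' totClosed_absAcyclic.ext₂

instance : (absAcyclic A).IsStableUnderRetracts where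
  of_retract {X Y} h hY := by
    obtain ⟨Z, ⟨e⟩⟩ := exists_iso_biprod_of_retract h
    exact totClosed_absAcyclic.smd X Z (totClosed_absAcyclic.iso e hY)

lemma absAcyclic_quotient_totCone {S : ShortComplex (CochainComplex A ℤ)} (hS : S.ShortExact) :
    absAcyclic A ((HomotopyCategory.quotient A (ComplexShape.up ℤ)).obj (totCone.obj S)) := by
  rw [← (absAcyclic A).prop_shift_iff_of_isStableUnderShift _ (-1 : ℤ)]
  exact (absAcyclic A).prop_of_iso (((HomotopyCategory.quotient A _).commShiftIso (-1 : ℤ)).app _)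
    (totClosed_absAcyclic.tot S.f S.g S.zero hS)

lemma absAcyclic_le {Q : ObjectProperty (HomotopyCategory A (ComplexShape.up ℤ))}
    [Q.IsTriangulated] [Q.IsStableUnderRetracts]
    (hQ : ∀ S : ShortComplex (CochainComplex A ℤ), S.ShortExact →
      Q ((HomotopyCategory.quotient A (ComplexShape.up ℤ)).obj (totCone.obj S))) :
    absAcyclic A ≤ Q := by
  refine fun _ hX ↦ hX Q
    { tot f g hfg h := ?_
      zero _ hX := Q.prop_of_isZero hX
      iso e := Q.prop_of_iso e
      shift X n := Q.le_shift n X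
      ext₂ T hT := Q.ext_of_isTriangulatedClosed₂ T hT
      smd _ _ := ObjectProperty.IsStableUnderRetracts.of_biprod_left Q }
  have e := ((HomotopyCategory.quotient A _).commShiftIso (-1 : ℤ)).app
    (totCone.obj (ShortComplex.mk f g hfg))
  exact Q.prop_of_iso e.symm (Q.le_shift (-1 : ℤ) _ (hQ _ h))

variable (A) in
lemma absW_eq_trW : absW A = (absAcyclic A).trW := by
  ext X Y f
  exact ⟨fun ⟨Z, g, h, hT, hZ⟩ ↦ ⟨Z, g, h, hT, hZ⟩, fun ⟨Z, g, h, hT, hZ⟩ ↦ ⟨Z, g, h, hT, hZ⟩⟩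

end AbsolutelyAcyclic

section Comparison

variable {𝒰 : Type u₁} [Category.{v₁} 𝒰] [Abelian 𝒰] (ι : 𝒰 ⥤ A) [ι.Additive]

lemma absAcyclic_le_inverseImage_mapHomotopyCategory
    [PreservesFiniteLimits ι] [PreservesFiniteColimits ι] :
    absAcyclic 𝒰 ≤ (absAcyclic A).inverseImage (ι.mapHomotopyCategory (ComplexShape.up ℤ)) := by
  have : ((absAcyclic A).inverseImage
      (ι.mapHomotopyCategory (ComplexShape.up ℤ))).IsStableUnderRetracts :=
    ⟨fun h hY ↦ (absAcyclic A).prop_of_retract (h.map _) hY⟩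
  exact absAcyclic_le fun S hS ↦ (absAcyclic A).prop_of_iso
    ((HomotopyCategory.quotient A _).mapIso (mapTotConeIso ι S).symm)
    (absAcyclic_quotient_totCone (hS.map_of_exact (ι.mapHomologicalComplex _)))

variable [ι.Full] [ι.Faithful] [ι.essImage.IsClosedUnderSubobjects]
  [ι.essImage.IsClosedUnderQuotients] [ι.essImage.IsClosedUnderExtensions]

lemma factorsThrough_quotient_totCone (hι : LiftsAlongEpi ι.essImage)
    {S : ShortComplex (CochainComplex A ℤ)} (hS : S.ShortExact) :
    FactorsThrough (ι.mapHomotopyCategory (ComplexShape.up ℤ)).essImage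
      ((absAcyclic 𝒰).map (ι.mapHomotopyCategory (ComplexShape.up ℤ)))
      ((HomotopyCategory.quotient A (ComplexShape.up ℤ)).obj (totCone.obj S)) := by
  let q := HomotopyCategory.quotient A (ComplexShape.up ℤ)
  rintro X f ⟨K, ⟨i⟩⟩
  obtain ⟨K, rfl⟩ := HomotopyCategory.quotient_obj_surjective K
  let M := (ι.mapHomologicalComplex (ComplexShape.up ℤ)).obj K
  let i : q.obj M ≅ X := i
  obtain ⟨φ, hφ⟩ := q.map_surjective (i.hom ≫ f)
  obtain ⟨S', j, ψ, hS', hX₂, rfl⟩ :=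
    exists_shortExact_comp_totConeMap_eq hι hS (fun n ↦ ι.obj_mem_essImage (K.X n)) φ
  obtain ⟨S'', hS'', ⟨e⟩⟩ := exists_shortExact_map_iso ι hS' hX₂
  exact ⟨q.obj (totCone.obj S'), i.inv ≫ q.map ψ, q.map (totCone.map j),
    ⟨_, absAcyclic_quotient_totCone hS'', ⟨q.mapIso (mapTotConeIso ι S'' ≪≫ totCone.mapIso e)⟩⟩,
    by rw [Category.assoc, ← q.map_comp, hφ, i.inv_hom_id_assoc]⟩

lemma absAcyclic_le_factorsThrough (hι : LiftsAlongEpi ι.essImage) :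
    absAcyclic A ≤ FactorsThrough (ι.mapHomotopyCategory (ComplexShape.up ℤ)).essImage
      ((absAcyclic 𝒰).map (ι.mapHomotopyCategory (ComplexShape.up ℤ))) := by
  have := isTriangulated_factorsThrough
    (P := (ι.mapHomotopyCategory (ComplexShape.up ℤ)).essImage)
    (N := (absAcyclic 𝒰).map (ι.mapHomotopyCategory (ComplexShape.up ℤ)))
    fun _ ⟨K, _, e⟩ ↦ ⟨K, e⟩
  exact absAcyclic_le fun _ ↦ factorsThrough_quotient_totCone ι hι

end Comparison

/-- Let `A` be abelian and `U ⊆ A` a non-empty full subcategory closed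
under subobjects, quotients and extensions, such that every epimorphism `B ↠ U` with
`U ∈ U` admits a subobject `V ⊆ B` with `V ∈ U` mapping epimorphically onto `U`.
Then the induced functor `D^abs(U) ⥤ D^abs(A)` between absolute derived categories is
fully faithful.  Here `U` is formalized as an abelian category `𝒰` with a fully
faithful exact functor `ι` to `A` with essential image the objects satisfying `P`, and
the absolute derived categories as localizations of the homotopy categories at the
morphisms with absolutely acyclic cone. -/
theorem stmt_12 (P : A → Prop)
    (hne : ∃ X, P X)
    (hsub : ∀ {X Y : A} (f : X ⟶ Y), Mono f → P Y → P X)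
    (hquot : ∀ {X Y : A} (f : X ⟶ Y), Epi f → P X → P Y)
    (hext : ∀ (S : ShortComplex A), S.ShortExact → P S.X₁ → P S.X₃ → P S.X₂)
    (hlift : ∀ {B U : A} (p : B ⟶ U), Epi p → P U →
      ∃ (V : A) (v : V ⟶ B), Mono v ∧ P V ∧ Epi (v ≫ p))
    {𝒰 : Type u₁} [Category.{v₁} 𝒰] [Abelian 𝒰]
    (ι : 𝒰 ⥤ A) [ι.Full] [ι.Faithful] [ι.Additive]
    [PreservesFiniteLimits ι] [PreservesFiniteColimits ι]
    (hima : ∀ X : 𝒰, P (ι.obj X))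
    (himb : ∀ M : A, P M → ∃ X : 𝒰, Nonempty (ι.obj X ≅ M))
    {D𝒰 : Type u₂} [Category.{v₂} D𝒰] (L𝒰 : HomotopyCategory 𝒰 (ComplexShape.up ℤ) ⥤ D𝒰)
    [L𝒰.IsLocalization (absW 𝒰)]
    {DA : Type u₃} [Category.{v₃} DA] (LA : HomotopyCategory A (ComplexShape.up ℤ) ⥤ DA)
    [LA.IsLocalization (absW A)]
    (F : D𝒰 ⥤ DA)
    (hF : (ι.mapHomotopyCategory (ComplexShape.up ℤ) ⋙ LA) ≅ (L𝒰 ⋙ F)) :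
    F.Full ∧ F.Faithful := by
  have hP : ι.essImage = P := by
    ext M
    exact ⟨fun ⟨X, ⟨e⟩⟩ ↦ hquot e.hom inferInstance (hima X), himb M⟩
  have : ι.essImage.IsClosedUnderSubobjects := hP ▸ ⟨fun f hf hY ↦ hsub f hf hY⟩
  have : ι.essImage.IsClosedUnderQuotients := hP ▸ ⟨fun f hf hX ↦ hquot f hf hX⟩
  have : ι.essImage.IsClosedUnderExtensions := hP ▸ ⟨fun hS h₁ h₃ ↦ hext _ hS h₁ h₃⟩
  have hι : LiftsAlongEpi ι.essImage := hP ▸ fun B U p hp hU ↦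
    have ⟨V, v, _, hV, hvp⟩ := hlift p hp hU
    ⟨V, v, hV, hvp⟩
  have hN := absAcyclic_le_inverseImage_mapHomotopyCategory ι
  have hB := absAcyclic_le_factorsThrough ι hι
  have := isVerdierLeftLocalizing_essImage_of_le_factorsThrough hN hB
  have : LA.IsLocalization (absAcyclic A).trW := absW_eq_trW A ▸ inferInstance
  have : L𝒰.IsLocalization
      ((absAcyclic A).inverseImage (ι.mapHomotopyCategory (ComplexShape.up ℤ))).trW := by
    rw [inverseImage_eq_of_le_factorsThrough hN hB, ← absW_eq_trW]
    infer_instance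
  exact fullyFaithful_of_isVerdierLeftLocalizing_essImage _ (absAcyclic A) hF
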